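/- Let αp ≥ 1 with α > 0, p > 0, and let {X_{m,n} : m ≥ 1, n ≥ 1} be a double array of integrable random variables such that for every ε > 0, ∑_{m=1}^∞ ∑_{n=1}^∞ (mn)^{αp−2} P( max_{1≤u≤m, 1≤v≤n} |∑_{i=1}^{u} ∑_{j=1}^{v} (X_{i,j} − E X_{i,j})| > ε (mn)^{α} ) < ∞. Then almost surely, max_{1≤u≤m, 1≤v≤n} |∑_{i=1}^{u} ∑_{j=1}^{v} (X_{i,j} − E X_{i,j})| / (mn)^{α} → 0 as max(m, n) → ∞. -/

import Mathlib

/-!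
The argument is dyadic. On the block `2 ^ k ≤ m < 2 ^ (k + 1)`, `2 ^ l ≤ n < 2 ^ (l + 1)` the
maximum `maxDS f m n` is at least `maxDS f (2 ^ k) (2 ^ l)`, and the weight satisfies
`(mn) ^ (αp - 2) ≥ (mn)⁻¹ ≥ (4 * 2 ^ k * 2 ^ l)⁻¹` because `αp ≥ 1`. The block has `2 ^ k * 2 ^ l`
terms, so its contribution to the series is at least one quarter of the probability of the dyadic
event `{ε (4 * 2 ^ k * 2 ^ l) ^ α < maxDS f (2 ^ k) (2 ^ l)}`. These probabilities are therefore
summable (`summable_dyadic`), and by the Borel–Cantelli lemma almost surely only finitely many of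
the dyadic events occur. Monotonicity of `maxDS` extends the bound from the dyadic corner
`(2 ^ (k + 1), 2 ^ (l + 1))` down to all `(m, n)` in the block, at the price of a factor `16 ^ α`
(`bound_of_dyadic`).
-/

open MeasureTheory ProbabilityTheory Finset Filter
open scoped NNReal ENNReal

noncomputable section

/-- `rlog x` is the natural logarithm of `max x 2`. -/
def rlog (x : ℝ) : ℝ := Real.log (max x 2)

/-- `itlog k x` is the `k`-fold iterate of `rlog` applied to `x`. -/
def itlog : ℕ → ℝ → ℝ
  | 0, x => x
  | k + 1, x => rlog (itlog k x)

/-- `logNu2 ν x = (log x)(log log x) ⋯ (log ⋯ log x)²`, the product of the first `ν`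
iterated logarithms of `x`, with the last (`ν`-fold iterated) factor squared. -/
def logNu2 (ν : ℕ) (x : ℝ) : ℝ := (∏ k ∈ Finset.Icc 1 ν, itlog k x) * itlog ν x

/-- The maximum of the (nonnegative) values `g i j` over `1 ≤ i ≤ M`, `1 ≤ j ≤ N`. -/
def maxNN (M N : ℕ) (g : ℕ → ℕ → ℝ) : ℝ :=
  (((Finset.Icc 1 M ×ˢ Finset.Icc 1 N).sup fun p => Real.toNNReal (g p.1 p.2) : ℝ≥0) : ℝ)

/-- `maxDS f m n = max_{1 ≤ u ≤ m, 1 ≤ v ≤ n} |∑_{i=1}^{u} ∑_{j=1}^{v} f i j|`. -/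
def maxDS (f : ℕ → ℕ → ℝ) (m n : ℕ) : ℝ :=
  maxNN m n fun u v => |∑ i ∈ Finset.Icc 1 u, ∑ j ∈ Finset.Icc 1 v, f i j|

/-- Index set of a doubly-indexed array: pairs of indices that are both at least `1`. -/
abbrev PIdx : Type := {k : ℕ × ℕ // 1 ≤ k.1 ∧ 1 ≤ k.2}

/-- Condition (H_{2q}) with a given constant `C`: for every finite subfamily and every
family of nondecreasing functions (whose relevant expectations are finite),
`E|∑ (f_λ(X_λ) - E f_λ(X_λ))|^{2q}
   ≤ C (|I| max E|f_λ(X_λ)|^{2q} + |I|^q max (E f_λ(X_λ)²)^q)`. -/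
def CondHWith {Ω : Type*} [MeasureSpace Ω] {Λ : Type*} (q C : ℝ) (X : Λ → Ω → ℝ) : Prop :=
  ∀ (I : Finset Λ) (hI : I.Nonempty) (f : Λ → ℝ → ℝ),
    (∀ l ∈ I, Monotone (f l)) →
    (∀ l ∈ I, Integrable fun ω => f l (X l ω)) →
    (∀ l ∈ I, Integrable fun ω => (f l (X l ω)) ^ 2) →
    (∀ l ∈ I, Integrable fun ω => |f l (X l ω)| ^ (2 * q)) →
    (Integrable fun ω => |∑ l ∈ I, (f l (X l ω) - ∫ ω', f l (X l ω'))| ^ (2 * q)) →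
    ∫ ω, |∑ l ∈ I, (f l (X l ω) - ∫ ω', f l (X l ω'))| ^ (2 * q) ≤
      C * ((I.card : ℝ) * I.sup' hI (fun l => ∫ ω, |f l (X l ω)| ^ (2 * q)) +
           (I.card : ℝ) ^ q * I.sup' hI fun l => (∫ ω, (f l (X l ω)) ^ 2) ^ q)

/-- Condition (H_{2q}): there is a finite constant for which `CondHWith` holds. -/
def CondH {Ω : Type*} [MeasureSpace Ω] {Λ : Type*} (q : ℝ) (X : Λ → Ω → ℝ) : Prop :=
  ∃ C : ℝ, CondHWith q C X

/-- The family `X` is stochastically dominated by the random variable `Y`: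
`sup_λ P(|X_λ| > x) ≤ P(|Y| > x)` for every real `x`. -/
def StochDom {Ω : Type*} [MeasureSpace Ω] {Λ : Type*} (X : Λ → Ω → ℝ) (Y : Ω → ℝ) : Prop :=
  ∀ x : ℝ, ∀ l : Λ, volume {ω | x < |X l ω|} ≤ volume {ω | x < |Y ω|}

/-- Uniform integrability: `sup_λ E(|Y_λ| 1(|Y_λ| > a)) → 0` as `a → ∞`. -/
def UnifInt {Ω : Type*} [MeasureSpace Ω] {Λ : Type*} (Y : Λ → Ω → ℝ) : Prop :=
  (∀ l, Integrable (Y l)) ∧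
  ∀ ε : ℝ, 0 < ε → ∃ a : ℝ, ∀ l, ∫ ω, (if a < |Y l ω| then |Y l ω| else 0) ≤ ε

/-- A slowly varying function: positive and measurable on `[0,∞)` with
`L(cx)/L(x) → 1` as `x → ∞` for every `c > 0`. -/
def SlowlyVarying (L : ℝ → ℝ) : Prop :=
  Measurable L ∧ (∀ x : ℝ, 0 ≤ x → 0 < L x) ∧
  ∀ c : ℝ, 0 < c → Tendsto (fun x => L (c * x) / L x) atTop (nhds 1)

/-- `Lt` is a de Bruijn conjugate of `L`. -/
def DeBruijnConjugate (L Lt : ℝ → ℝ) : Prop :=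
  SlowlyVarying Lt ∧
  Tendsto (fun x => L x * Lt (x * L x)) atTop (nhds 1) ∧
  Tendsto (fun x => Lt x * L (x * Lt x)) atTop (nhds 1)

/-- Truncation from above at level `b (2^s)`:
`X_{i,j} 1(X_{i,j} ≤ b_{2^s}) + b_{2^s} 1(X_{i,j} > b_{2^s})`. -/
def truncUp {Ω : Type*} (X : ℕ → ℕ → Ω → ℝ) (b : ℕ → ℝ) (s i j : ℕ) (ω : Ω) : ℝ :=
  if X i j ω ≤ b (2 ^ s) then X i j ω else b (2 ^ s)

/-- Two-sided truncation at level `b (2^s)`: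
`-b_{2^s} 1(X < -b_{2^s}) + X 1(|X| ≤ b_{2^s}) + b_{2^s} 1(X > b_{2^s})`. -/
def truncTwo {Ω : Type*} (X : ℕ → ℕ → Ω → ℝ) (b : ℕ → ℝ) (s i j : ℕ) (ω : Ω) : ℝ :=
  if X i j ω < -b (2 ^ s) then -b (2 ^ s)
  else if b (2 ^ s) < X i j ω then b (2 ^ s) else X i j ω

lemma maxDS_mono (f : ℕ → ℕ → ℝ) {m m' n n' : ℕ} (hm : m ≤ m') (hn : n ≤ n') :
    maxDS f m n ≤ maxDS f m' n' := by
  unfold maxDS maxNN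
  exact_mod_cast Finset.sup_mono
    (Finset.product_subset_product (Finset.Icc_subset_Icc_right hm)
      (Finset.Icc_subset_Icc_right hn))

/-- The dyadic blocks are disjoint: `(k, l, i, j) ↦ (2 ^ k + i, 2 ^ l + j)` is injective for
`i < 2 ^ k`, `j < 2 ^ l`. Both coordinates are shifted down by one to match a series indexed
from `0`. -/
lemma block_injective : Function.Injective
    fun x : (Σ q : ℕ × ℕ, Fin (2 ^ q.1) × Fin (2 ^ q.2)) =>
      ((2 ^ x.1.1 + x.2.1 - 1, 2 ^ x.1.2 + x.2.2 - 1) : ℕ × ℕ) := by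
  have hlog : ∀ k i : ℕ, i < 2 ^ k → Nat.log 2 (2 ^ k + i) = k := fun k i hi =>
    Nat.log_eq_of_pow_le_of_lt_pow (by omega) (by rw [pow_succ]; omega)
  have key : ∀ k k' i i' : ℕ, i < 2 ^ k → i' < 2 ^ k' →
      2 ^ k + i - 1 = 2 ^ k' + i' - 1 → k = k' ∧ i = i' := by
    intro k k' i i' hi hi' h
    have h1 : 2 ^ k + i = 2 ^ k' + i' := by
      have := Nat.two_pow_pos k
      have := Nat.two_pow_pos k'
      omega
    have h2 : k = k' := by rw [← hlog k i hi, h1, hlog k' i' hi']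
    subst h2
    exact ⟨rfl, by omega⟩
  rintro ⟨⟨k, l⟩, ⟨i, hi⟩, ⟨j, hj⟩⟩ ⟨⟨k', l'⟩, ⟨i', hi'⟩, ⟨j', hj'⟩⟩ h
  simp only [Prod.mk.injEq] at h hi hj hi' hj'
  obtain ⟨rfl, rfl⟩ := key _ _ _ _ hi hi' h.1
  obtain ⟨rfl, rfl⟩ := key _ _ _ _ hj hj' h.2
  rfl

/-- Condensation: if `P m n` dominates `D q` on the dyadic block of `q`, and the series of `P`
with weights `(mn) ^ β`, `β ≥ -1`, converges, then so does the unweighted series of `D`. -/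
lemma summable_dyadic {β : ℝ} (hβ : -1 ≤ β) {P : ℕ → ℕ → ℝ} {D : ℕ × ℕ → ℝ}
    (hD : ∀ q, 0 ≤ D q)
    (hDP : ∀ k l i j : ℕ, i < 2 ^ k → j < 2 ^ l → D (k, l) ≤ P (2 ^ k + i) (2 ^ l + j))
    (hs : Summable fun k : ℕ × ℕ =>
      (((k.1 + 1) * (k.2 + 1) : ℕ) : ℝ) ^ β * P (k.1 + 1) (k.2 + 1)) :
    Summable D := by
  have h1 := (hs.comp_injective block_injective).sigma
  refine Summable.of_nonneg_of_le hD (fun q => ?_) (h1.mul_left 4)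
  obtain ⟨k, l⟩ := q
  rw [tsum_fintype]
  have hterm : ∀ b : Fin (2 ^ k) × Fin (2 ^ l),
      (4 * (2 ^ k * 2 ^ l : ℝ))⁻¹ * D (k, l) ≤
        ((fun k : ℕ × ℕ => (((k.1 + 1) * (k.2 + 1) : ℕ) : ℝ) ^ β * P (k.1 + 1) (k.2 + 1)) ∘
          fun x : (Σ q : ℕ × ℕ, Fin (2 ^ q.1) × Fin (2 ^ q.2)) =>
            ((2 ^ x.1.1 + x.2.1 - 1, 2 ^ x.1.2 + x.2.2 - 1) : ℕ × ℕ)) ⟨(k, l), b⟩ := by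
    rintro ⟨⟨i, hi⟩, ⟨j, hj⟩⟩
    have hk := Nat.two_pow_pos k
    have hl := Nat.two_pow_pos l
    have e1 : 2 ^ k + i - 1 + 1 = 2 ^ k + i := by omega
    have e2 : 2 ^ l + j - 1 + 1 = 2 ^ l + j := by omega
    simp only [Function.comp, e1, e2]
    have hx1 : (1 : ℝ) ≤ (((2 ^ k + i) * (2 ^ l + j) : ℕ) : ℝ) := by
      have : 0 < (2 ^ k + i) * (2 ^ l + j) := by positivity
      exact_mod_cast this
    have hx2 : (((2 ^ k + i) * (2 ^ l + j) : ℕ) : ℝ) ≤ 4 * (2 ^ k * 2 ^ l) := by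
      have : (2 ^ k + i) * (2 ^ l + j) ≤ (2 * 2 ^ k) * (2 * 2 ^ l) :=
        Nat.mul_le_mul (by omega) (by omega)
      have h4 : (2 ^ k + i) * (2 ^ l + j) ≤ 4 * (2 ^ k * 2 ^ l) := by
        refine this.trans (le_of_eq (by ring))
      exact_mod_cast h4
    have hw : (4 * (2 ^ k * 2 ^ l : ℝ))⁻¹ ≤ (((2 ^ k + i) * (2 ^ l + j) : ℕ) : ℝ) ^ β := by
      calc (4 * (2 ^ k * 2 ^ l : ℝ))⁻¹ ≤ (((2 ^ k + i) * (2 ^ l + j) : ℕ) : ℝ)⁻¹ :=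
            inv_anti₀ (by linarith) hx2
        _ = (((2 ^ k + i) * (2 ^ l + j) : ℕ) : ℝ) ^ (-1 : ℝ) := (Real.rpow_neg_one _).symm
        _ ≤ _ := Real.rpow_le_rpow_of_exponent_le hx1 hβ
    exact mul_le_mul hw (hDP k l i j hi hj) (hD _) (by positivity)
  have hsum := Finset.sum_le_sum fun b (_ : b ∈ Finset.univ) => hterm b
  rw [Finset.sum_const, Finset.card_univ, Fintype.card_prod, Fintype.card_fin, Fintype.card_fin,
    nsmul_eq_mul] at hsum
  rw [show (((2 ^ k * 2 ^ l : ℕ)) : ℝ) = 2 ^ k * 2 ^ l by push_cast; rfl] at hsum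
  have e : (2 ^ k * 2 ^ l : ℝ) * ((4 * (2 ^ k * 2 ^ l : ℝ))⁻¹ * D (k, l)) = D (k, l) / 4 := by
    field_simp
  rw [e] at hsum
  linarith

/-- If all but finitely many dyadic bounds hold at level `δ`, then `maxDS f m n` is at most
`δ * 16 ^ α * (mn) ^ α` as soon as `max m n` is large. -/
lemma bound_of_dyadic {α δ : ℝ} (hα : 0 < α) (hδ : 0 < δ) (f : ℕ → ℕ → ℝ)
    (hfin : ∀ᶠ q : ℕ × ℕ in cofinite,
      maxDS f (2 ^ q.1) (2 ^ q.2) ≤ δ * (4 * (2 ^ q.1 * 2 ^ q.2 : ℝ)) ^ α) :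
    ∃ N : ℕ, ∀ m n : ℕ, 1 ≤ m → 1 ≤ n → N ≤ max m n →
      maxDS f m n ≤ δ * 16 ^ α * ((m * n : ℕ) : ℝ) ^ α := by
  have hF := Filter.eventually_cofinite.1 hfin
  obtain ⟨⟨K, L⟩, hKL⟩ := hF.bddAbove
  refine ⟨2 ^ (max K L), fun m n hm hn hN => ?_⟩
  have hgood : maxDS f (2 ^ (Nat.log 2 m + 1)) (2 ^ (Nat.log 2 n + 1)) ≤
      δ * (4 * (2 ^ (Nat.log 2 m + 1) * 2 ^ (Nat.log 2 n + 1) : ℝ)) ^ α := by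
    by_contra hbad
    have hle := hKL (show (Nat.log 2 m + 1, Nat.log 2 n + 1) ∈ _ from hbad)
    have h1 : Nat.log 2 m + 1 ≤ K := hle.1
    have h2 : Nat.log 2 n + 1 ≤ L := hle.2
    have h3 : m < 2 ^ (max K L) := (Nat.lt_pow_succ_log_self (by norm_num) m).trans_le
      (Nat.pow_le_pow_right (by norm_num) (h1.trans (le_max_left _ _)))
    have h4 : n < 2 ^ (max K L) := (Nat.lt_pow_succ_log_self (by norm_num) n).trans_le
      (Nat.pow_le_pow_right (by norm_num) (h2.trans (le_max_right _ _)))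
    exact absurd hN (not_le.2 (max_lt h3 h4))
  refine (maxDS_mono f (Nat.lt_pow_succ_log_self (by norm_num) m).le
    (Nat.lt_pow_succ_log_self (by norm_num) n).le).trans (hgood.trans ?_)
  rw [mul_assoc, ← Real.mul_rpow (by norm_num) (by positivity)]
  have hm' : (2 : ℝ) ^ Nat.log 2 m ≤ m := by
    exact_mod_cast Nat.pow_log_le_self 2 (by omega)
  have hn' : (2 : ℝ) ^ Nat.log 2 n ≤ n := by
    exact_mod_cast Nat.pow_log_le_self 2 (by omega)
  have hmn : (2 : ℝ) ^ Nat.log 2 m * 2 ^ Nat.log 2 n ≤ m * n :=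
    mul_le_mul hm' hn' (by positivity) (by positivity)
  have hbase : 4 * (2 ^ (Nat.log 2 m + 1) * 2 ^ (Nat.log 2 n + 1) : ℝ) ≤
      16 * ((m * n : ℕ) : ℝ) := by
    rw [pow_succ, pow_succ]
    push_cast
    linarith
  gcongr

/-- Complete convergence implies the almost sure Marcinkiewicz–Zygmund-type SLLN
for the maximum of double sums. -/
theorem complete_convergence_implies_slln
    {Ω : Type*} [MeasureSpace Ω] [IsProbabilityMeasure (volume : Measure Ω)]
    (p α : ℝ) (hα : 0 < α) (hp : 0 < p) (hαp : 1 ≤ α * p)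
    (X : ℕ → ℕ → Ω → ℝ)
    (hint : ∀ m n : ℕ, 1 ≤ m → 1 ≤ n → Integrable (X m n))
    (hsum : ∀ ε : ℝ, 0 < ε →
      Summable fun k : ℕ × ℕ =>
        (((k.1 + 1) * (k.2 + 1) : ℕ) : ℝ) ^ (α * p - 2) *
          (volume {ω | ε * (((k.1 + 1) * (k.2 + 1) : ℕ) : ℝ) ^ α <
            maxDS (fun i j => X i j ω - ∫ ω', X i j ω') (k.1 + 1) (k.2 + 1)}).toReal) :
    ∀ᵐ ω ∂(volume : Measure Ω), ∀ ε : ℝ, 0 < ε → ∃ N : ℕ, ∀ m n : ℕ,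
      1 ≤ m → 1 ≤ n → N ≤ max m n →
        maxDS (fun i j => X i j ω - ∫ ω', X i j ω') m n / ((m * n : ℕ) : ℝ) ^ α ≤ ε := by
  have hBC : ∀ δ : ℝ, 0 < δ → ∀ᵐ ω ∂(volume : Measure Ω), ∀ᶠ q : ℕ × ℕ in cofinite,
      maxDS (fun i j => X i j ω - ∫ ω', X i j ω') (2 ^ q.1) (2 ^ q.2) ≤
        δ * (4 * (2 ^ q.1 * 2 ^ q.2 : ℝ)) ^ α := by
    intro δ hδ
    have hS : Summable fun q : ℕ × ℕ =>
        (volume {ω | δ * (4 * (2 ^ q.1 * 2 ^ q.2 : ℝ)) ^ α <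
          maxDS (fun i j => X i j ω - ∫ ω', X i j ω') (2 ^ q.1) (2 ^ q.2)}).toReal := by
      refine summable_dyadic (β := α * p - 2)
        (P := fun m n => (volume {ω | δ * ((m * n : ℕ) : ℝ) ^ α <
          maxDS (fun i j => X i j ω - ∫ ω', X i j ω') m n}).toReal)
        (by linarith) (fun _ => ENNReal.toReal_nonneg) ?_ (hsum δ hδ)
      intro k l i j hi hj
      refine ENNReal.toReal_mono (measure_ne_top _ _) (measure_mono fun ω hω => ?_)
      refine lt_of_le_of_lt ?_ (lt_of_lt_of_le (Set.mem_ofPred_eq ▸ hω)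
        (maxDS_mono _ (Nat.le_add_right _ _) (Nat.le_add_right _ _)))
      have hx : (((2 ^ k + i) * (2 ^ l + j) : ℕ) : ℝ) ≤ 4 * (2 ^ k * 2 ^ l) := by
        have h4 : (2 ^ k + i) * (2 ^ l + j) ≤ 4 * (2 ^ k * 2 ^ l) :=
          (Nat.mul_le_mul (show 2 ^ k + i ≤ 2 * 2 ^ k by omega)
            (show 2 ^ l + j ≤ 2 * 2 ^ l by omega)).trans (le_of_eq (by ring))
        exact_mod_cast h4
      dsimp only
      gcongr
    have hne := hS.tsum_ofReal_ne_top
    simp only [ENNReal.ofReal_toReal (measure_ne_top _ _)] at hne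
    filter_upwards [ae_finite_setOfPred_mem hne] with ω hω
    filter_upwards [hω.compl_mem_cofinite] with q hq
    exact not_lt.1 hq
  -- A countable family of levels `δ` suffices to handle all `ε` on one almost sure event.
  have hall := ae_all_iff.2 fun r : ℕ => hBC (1 / ((r : ℝ) + 1)) (by positivity)
  filter_upwards [hall] with ω hω ε hε
  have h16 : (0 : ℝ) < 16 ^ α := by positivity
  obtain ⟨r, hr⟩ := exists_nat_one_div_lt (div_pos hε h16)
  obtain ⟨N, hN⟩ := bound_of_dyadic hα (by positivity) _ (hω r)
  refine ⟨N, fun m n hm hn hmn => ?_⟩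
  have hpos : (0 : ℝ) < ((m * n : ℕ) : ℝ) := by
    exact_mod_cast Nat.mul_pos hm hn
  rw [div_le_iff₀ (by positivity)]
  refine (hN m n hm hn hmn).trans ?_
  gcongr
  exact ((lt_div_iff₀ h16).1 hr).le
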